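/- arXiv:1206.4691 — 5 statements merged into one kernel-verified Lean document; each statement's English description precedes it below -/
import Mathlib

section
/- For every real K ≠ 0 and every x ∈ ℝ, both values y₊ = (−K² − 2 + 2√(4K²x² + K² + 1))/(4K²) and y₋ = (−K² − 2 − 2√(4K²x² + K² + 1))/(4K²) satisfy y < x²; that is, every point of either curve is exterior to the parabolic region {(x,y) : y ≥ x²}. -/
open Real

theorem branches_exterior_to_parabola (K : ℝ) (hK : K ≠ 0) (x : ℝ) :
    (-K ^ 2 - 2 + 2 * Real.sqrt (4 * K ^ 2 * x ^ 2 + K ^ 2 + 1)) / (4 * K ^ 2) < x ^ 2 ∧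
    (-K ^ 2 - 2 - 2 * Real.sqrt (4 * K ^ 2 * x ^ 2 + K ^ 2 + 1)) / (4 * K ^ 2) < x ^ 2 := by
  have hK2 : 0 < K ^ 2 := by positivity
  have hKx : 0 ≤ 4 * K ^ 2 * x ^ 2 := by positivity
  have hsq := Real.sq_sqrt (show 0 ≤ 4 * K ^ 2 * x ^ 2 + K ^ 2 + 1 by positivity)
  have hone : 1 < Real.sqrt (4 * K ^ 2 * x ^ 2 + K ^ 2 + 1) :=
    Real.lt_sqrt_of_sq_lt (by linarith)
  have hpos := pow_pos (sub_pos.2 hone) 2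
  constructor <;> rw [div_lt_iff₀ (by positivity)] <;> nlinarith
end

section
/- For every real K ≠ 0, the function f(x) = (−K² − 2 − 2√(4K²x² + K² + 1))/(4K²) satisfies lim_{x→+∞} f(x)/x = −1/|K| and lim_{x→−∞} f(x)/x = 1/|K|; that is, the curve y = f(x) has slant asymptotes with slopes ∓1/|K|. -/
open Real Filter

/-- Dividing `√(a x² + b)` by `x` as `x → +∞`. -/
lemma tendsto_sqrt_mul_sq_add_div_atTop (a b : ℝ) :
    Tendsto (fun x : ℝ => √(a * x ^ 2 + b) / x) atTop (nhds √a) := by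
  have h : Tendsto (fun x : ℝ => √(a + b * x⁻¹ ^ 2)) atTop (nhds √(a + b * 0 ^ 2)) :=
    ((tendsto_inv_atTop_zero.pow 2).const_mul b |>.const_add a).sqrt
  rw [show a + b * 0 ^ 2 = a by ring] at h
  refine h.congr' ?_
  filter_upwards [eventually_gt_atTop 0] with x hx
  have hx_eq : a + b * x⁻¹ ^ 2 = (a * x ^ 2 + b) / x ^ 2 := by
    field_simp
  rw [hx_eq, Real.sqrt_div' _ (sq_nonneg x), Real.sqrt_sq hx.le]

lemma tendsto_minus_branch_div_atTop (K : ℝ) (hK : K ≠ 0) :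
    Tendsto
      (fun x : ℝ =>
        (-K ^ 2 - 2 - 2 * Real.sqrt (4 * K ^ 2 * x ^ 2 + K ^ 2 + 1)) / (4 * K ^ 2) / x)
      atTop (nhds (-(1 / |K|))) := by
  have h := (((tendsto_inv_atTop_zero (𝕜 := ℝ)).const_mul (-K ^ 2 - 2)).sub
    ((tendsto_sqrt_mul_sq_add_div_atTop (4 * K ^ 2) (K ^ 2 + 1)).const_mul 2)).div_const
      (4 * K ^ 2)
  have hsqrt : √(4 * K ^ 2) = 2 * |K| := by
    rw [show 4 * K ^ 2 = (2 * K) ^ 2 by ring, Real.sqrt_sq_eq_abs, abs_mul, abs_two]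
  have hlim : ((-K ^ 2 - 2) * 0 - 2 * √(4 * K ^ 2)) / (4 * K ^ 2) = -(1 / |K|) := by
    have hK' : |K| ≠ 0 := abs_ne_zero.mpr hK
    rw [hsqrt, ← sq_abs K]
    field_simp
    ring
  rw [hlim] at h
  refine h.congr fun x => ?_
  rw [← add_assoc]
  ring

theorem minus_branch_slant_asymptotes (K : ℝ) (hK : K ≠ 0) :
    Tendsto
      (fun x : ℝ =>
        (-K ^ 2 - 2 - 2 * Real.sqrt (4 * K ^ 2 * x ^ 2 + K ^ 2 + 1)) / (4 * K ^ 2) / x)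
      atTop (nhds (-(1 / |K|))) ∧
    Tendsto
      (fun x : ℝ =>
        (-K ^ 2 - 2 - 2 * Real.sqrt (4 * K ^ 2 * x ^ 2 + K ^ 2 + 1)) / (4 * K ^ 2) / x)
      atBot (nhds (1 / |K|)) := by
  have h := tendsto_minus_branch_div_atTop K hK
  refine ⟨h, ?_⟩
  have h_neg := (h.comp tendsto_neg_atBot_atTop).neg
  rw [neg_neg] at h_neg
  refine h_neg.congr fun x => ?_
  simp only [Function.comp_apply, neg_sq, div_neg, neg_neg]
end

section
/- Let u, v be unit vectors in ℝ² with angle ϑ = ∠(u,v) ∈ (0, π), let O ∈ ℝ², and let W = {O + s·u + t·v : s, t ≥ 0} be the closed wedge with apex O and internal angle ϑ. If X = O − (s₀·u + t₀·v) with s₀ > 0 and t₀ > 0 (so X lies in the interior of the opposite wedge), then the aperture angle of X with respect to W equals ϑ, i.e. sup{∠(A − X, B − X) : A, B ∈ W} = ϑ. -/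
open Real InnerProductGeometry

/-- For `p = a u + b v` and `q = x u + y v` with nonnegative coefficients and unit vectors `u`, `v`
satisfying `⟪u, v⟫ = c`, the inner product `⟪p, q⟫` is at least `c |ay - bx|`. -/
lemma mul_abs_cross_le_cone_inner {a b x y c : ℝ} (ha : 0 ≤ a) (hb : 0 ≤ b) (hx : 0 ≤ x)
    (hy : 0 ≤ y) (hc : -1 ≤ c) :
    c * |a * y - b * x| ≤ a * x + b * y + (a * y + b * x) * c := by
  have key : ∀ p q : ℝ, 0 ≤ p → p ≤ q → p * q = (a * x) * (b * y) →
      0 ≤ a * x + b * y + 2 * p * c := by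
    intro p q hp hpq h
    have hax := mul_nonneg ha hx
    have hby := mul_nonneg hb hy
    have : 2 * p ≤ a * x + b * y := by
      refine le_of_sq_le_sq ?_ (by positivity)
      nlinarith [sq_nonneg (a * x - b * y), mul_le_mul_of_nonneg_left hpq hp]
    nlinarith [mul_le_mul_of_nonneg_left hc hp]
  rcases le_total (b * x) (a * y) with h | h
  · rw [abs_of_nonneg (by linarith)]
    linarith [key _ _ (by positivity) h (by ring)]
  · rw [abs_of_nonpos (by linarith)]
    linarith [key _ _ (by positivity) h (by ring)]

lemma mul_le_of_sq_add_sq_eq {I D N c : ℝ} (hD : 0 ≤ D) (hN : 0 ≤ N) (hc : c ^ 2 ≤ 1)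
    (h : I ^ 2 + (1 - c ^ 2) * D ^ 2 = N ^ 2) (hI : c * D ≤ I) : c * N ≤ I := by
  have e : I ^ 2 - (c * N) ^ 2 = (1 - c ^ 2) * (I ^ 2 - (c * D) ^ 2) := by
    rw [mul_pow, ← h]; ring
  rcases le_total 0 c with h0 | h0
  · have hcD : 0 ≤ c * D := by positivity
    refine le_of_sq_le_sq ?_ (hcD.trans hI)
    nlinarith [mul_nonneg (sub_nonneg.2 hc) (sub_nonneg.2 (pow_le_pow_left₀ hcD hI 2))]
  · rcases le_total 0 I with hI0 | hI0
    · exact (mul_nonpos_of_nonpos_of_nonneg h0 hN).trans hI0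
    · have h1 : (-I) ^ 2 ≤ (-(c * D)) ^ 2 :=
        pow_le_pow_left₀ (by linarith) (by linarith) 2
      have h2 : -I ≤ -(c * N) := by
        refine le_of_sq_le_sq ?_ (by nlinarith)
        nlinarith [mul_nonneg (sub_nonneg.2 hc) (sub_nonneg.2 h1)]
      linarith

/-- Two vectors in the open cone spanned by unit vectors `u` and `v` make an angle at most that
between `u` and `v`. -/
lemma angle_le_angle_of_mem_cone {E : Type*} [NormedAddCommGroup E] [InnerProductSpace ℝ E]
    {u v : E} (hu : ‖u‖ = 1) (hv : ‖v‖ = 1) (huv : angle u v < π) {a b x y : ℝ}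
    (ha : 0 < a) (hb : 0 < b) (hx : 0 < x) (hy : 0 < y) :
    angle (a • u + b • v) (x • u + y • v) ≤ angle u v := by
  have hin : ∀ a b x y : ℝ, inner ℝ (a • u + b • v) (x • u + y • v) =
      a * x + b * y + (a * y + b * x) * inner ℝ u v := by
    intro a b x y
    simp only [inner_add_left, inner_add_right, real_inner_smul_left, real_inner_smul_right,
      real_inner_self_eq_norm_sq, hu, hv, real_inner_comm u v]
    ring
  have hcos : inner ℝ u v = cos (angle u v) := by simp [cos_angle, hu, hv]
  have hc1 : -1 < (inner ℝ u v : ℝ) := by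
    rw [hcos, ← cos_pi]
    exact cos_lt_cos_of_nonneg_of_le_pi (angle_nonneg _ _) le_rfl huv
  have hc2 : (inner ℝ u v : ℝ) ^ 2 ≤ 1 := hcos ▸ cos_sq_le_one _
  have hpos : ∀ a b : ℝ, 0 < a → 0 < b → 0 < ‖a • u + b • v‖ := by
    intro a b ha hb
    have h := real_inner_self_eq_norm_sq (a • u + b • v)
    rw [hin] at h
    have : 0 < ‖a • u + b • v‖ ^ 2 := by
      rw [← h]
      nlinarith [sq_nonneg (a - b), mul_pos (mul_pos ha hb) (neg_lt_iff_pos_add.1 hc1)]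
    exact (norm_nonneg _).lt_of_ne' fun h0 => by simp [h0] at this
  have hle := mul_le_of_sq_add_sq_eq (N := ‖a • u + b • v‖ * ‖x • u + y • v‖)
    (abs_nonneg _) (by positivity) hc2
    (by
      rw [mul_pow, ← real_inner_self_eq_norm_sq, ← real_inner_self_eq_norm_sq, hin, hin, sq_abs]
      ring)
    (mul_abs_cross_le_cone_inner ha.le hb.le hx.le hy.le hc1.le)
  rw [← hin] at hle
  apply arccos_le_arccos
  rw [hu, hv, mul_one, div_one]
  exact (le_div_iff₀ (mul_pos (hpos a b ha hb) (hpos x y hx hy))).2 hle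

theorem aperture_angle_in_opposite_wedge
    (u v : EuclideanSpace ℝ (Fin 2)) (hu : ‖u‖ = 1) (hv : ‖v‖ = 1)
    (ϑ : ℝ) (hϑ : ϑ = InnerProductGeometry.angle u v) (hϑ0 : 0 < ϑ) (hϑπ : ϑ < π)
    (O : EuclideanSpace ℝ (Fin 2))
    (W : Set (EuclideanSpace ℝ (Fin 2)))
    (hW : W = {P | ∃ s t : ℝ, 0 ≤ s ∧ 0 ≤ t ∧ P = O + s • u + t • v})
    (s₀ t₀ : ℝ) (hs₀ : 0 < s₀) (ht₀ : 0 < t₀)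
    (X : EuclideanSpace ℝ (Fin 2)) (hX : X = O - (s₀ • u + t₀ • v)) :
    sSup {θ : ℝ | ∃ A ∈ W, ∃ B ∈ W,
        θ = InnerProductGeometry.angle (A - X) (B - X)} = ϑ := by
  subst hϑ hW hX
  have hsub : ∀ s t : ℝ, O + s • u + t • v - (O - (s₀ • u + t₀ • v)) =
      (s + s₀) • u + (t + t₀) • v := by
    intro s t; module
  apply csSup_eq_of_forall_le_of_forall_lt_exists_gt
  · exact ⟨_, O, ⟨0, 0, by simp⟩, O, ⟨0, 0, by simp⟩, rfl⟩
  · rintro _ ⟨_, ⟨a, b, ha, hb, rfl⟩, _, ⟨x, y, hx, hy, rfl⟩, rfl⟩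
    rw [hsub, hsub]
    exact angle_le_angle_of_mem_cone hu hv hϑπ (by positivity) (by positivity) (by positivity)
      (by positivity)
  · intro w hw
    have hu0 : u ≠ 0 := norm_ne_zero_iff.1 (by simp [hu])
    have hv0 : v ≠ 0 := norm_ne_zero_iff.1 (by simp [hv])
    -- As `ε → 0⁺`, the directions `u + ε t₀ v` and `ε s₀ u + v` tend to `u` and `v`.
    have hcont : ContinuousAt
        (fun ε : ℝ => angle (u + (ε * t₀) • v) ((ε * s₀) • u + v)) 0 := by
      have hang : ContinuousAt (fun p : EuclideanSpace ℝ (Fin 2) × EuclideanSpace ℝ (Fin 2) =>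
          angle p.1 p.2) (u + ((0 : ℝ) * t₀) • v, ((0 : ℝ) * s₀) • u + v) := by
        simpa using continuousAt_angle (x := (u, v)) hu0 hv0
      exact hang.comp (f := fun ε : ℝ => (u + (ε * t₀) • v, (ε * s₀) • u + v))
        (by fun_prop)
    have hgt := hcont.eventually (lt_mem_nhds (a := w) (by simpa using hw))
    have hsmall : ∀ r : ℝ, ∀ᶠ ε : ℝ in nhds 0, ε * r < 1 := fun r =>
      (continuous_mul_const r).continuousAt.eventually_lt continuousAt_const (by simp)
    obtain ⟨ε, ⟨hε, hεs, hεt⟩, hε0⟩ := (((hgt.and ((hsmall s₀).and (hsmall t₀))).filter_mono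
      nhdsWithin_le_nhds).and (self_mem_nhdsWithin (s := Set.Ioi (0 : ℝ)))).exists
    have hε0 : 0 < ε := hε0
    refine ⟨_, ⟨O + (ε⁻¹ - s₀) • u + (0 : ℝ) • v, ⟨_, _, ?_, le_rfl, rfl⟩,
      O + (0 : ℝ) • u + (ε⁻¹ - t₀) • v, ⟨_, _, le_rfl, ?_, rfl⟩, rfl⟩, ?_⟩
    · rw [sub_nonneg, le_inv_comm₀ hs₀ hε0, ← one_div, le_div_iff₀ hs₀]
      exact hεs.le
    · rw [sub_nonneg, le_inv_comm₀ ht₀ hε0, ← one_div, le_div_iff₀ ht₀]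
      exact hεt.le
    · have e₁ : (ε⁻¹ - s₀ + s₀) • u + (0 + t₀) • v = ε⁻¹ • (u + (ε * t₀) • v) := by
        rw [smul_add, smul_smul, inv_mul_cancel_left₀ hε0.ne', sub_add_cancel, zero_add]
      have e₂ : (0 + s₀) • u + (ε⁻¹ - t₀ + t₀) • v = ε⁻¹ • ((ε * s₀) • u + v) := by
        rw [smul_add, smul_smul, inv_mul_cancel_left₀ hε0.ne', sub_add_cancel, zero_add]
      rw [hsub, hsub, e₁, e₂, angle_smul_left_of_pos _ _ (inv_pos.2 hε0),
        angle_smul_right_of_pos _ _ (inv_pos.2 hε0)]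
      exact hε
end

section
/- Let u, v be unit vectors in ℝ² with angle ϑ = ∠(u,v) ∈ (0, π), let O ∈ ℝ², and let W = {O + s·u + t·v : s, t ≥ 0}. Then for every point X ∈ ℝ², sup{∠(A − X, B − X) : A, B ∈ W, A ≠ X, B ≠ X} ≥ ϑ. Consequently, for any α < ϑ the set of points whose aperture angle with respect to W equals α is empty. -/
open Real InnerProductGeometry

open Filter Topology in
lemma tendsto_angle {E ι : Type*} [NormedAddCommGroup E] [InnerProductSpace ℝ E] {l : Filter ι}
    {u v : E} {f g : ι → E} (hu : u ≠ 0) (hv : v ≠ 0)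
    (hf : Tendsto f l (𝓝 u)) (hg : Tendsto g l (𝓝 v)) :
    Tendsto (fun i => angle (f i) (g i)) l (𝓝 (angle u v)) :=
  (continuous_arccos.tendsto _).comp
    ((hf.inner hg).div (hf.norm.mul hg.norm) (by simp [hu, hv]))

open Filter Topology in
/-- Adding a fixed vector to long multiples of `u` and `v` does not change their angle in the
limit. -/
lemma tendsto_angle_add_smul {E : Type*} [NormedAddCommGroup E] [InnerProductSpace ℝ E]
    {u v : E} (hu : u ≠ 0) (hv : v ≠ 0) (w : E) :
    Tendsto (fun r : ℝ => angle (w + r • u) (w + r • v)) atTop (𝓝 (angle u v)) := by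
  have key (x : E) : Tendsto (fun r : ℝ => r⁻¹ • w + x) atTop (𝓝 x) := by
    simpa using ((tendsto_inv_atTop_zero (𝕜 := ℝ)).smul_const w).add_const x
  have hlim : Tendsto (fun r : ℝ => angle (r⁻¹ • w + u) (r⁻¹ • w + v)) atTop (𝓝 (angle u v)) :=
    tendsto_angle hu hv (key u) (key v)
  refine hlim.congr' ?_
  filter_upwards [eventually_gt_atTop 0] with r hr
  have scale (x : E) : w + r • x = r • (r⁻¹ • w + x) := by
    rw [smul_add, smul_inv_smul₀ hr.ne']
  rw [scale u, scale v, angle_smul_smul hr.ne']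

open Filter in
lemma eventually_add_smul_ne_zero {E : Type*} [NormedAddCommGroup E] [NormedSpace ℝ E]
    {u : E} (hu : u ≠ 0) (w : E) : ∀ᶠ r : ℝ in atTop, w + r • u ≠ 0 := by
  filter_upwards [eventually_gt_atTop (‖w‖ / ‖u‖), eventually_gt_atTop 0] with r hr hr0 h
  have hnorm : ‖w‖ = r * ‖u‖ := by
    rw [eq_neg_of_add_eq_zero_left h, norm_neg, norm_smul, Real.norm_of_nonneg hr0.le]
  rw [div_lt_iff₀ (norm_pos_iff.mpr hu)] at hr
  exact hr.ne hnorm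

theorem aperture_angle_ge_wedge_angle
    (u v : EuclideanSpace ℝ (Fin 2)) (hu : ‖u‖ = 1) (hv : ‖v‖ = 1)
    (ϑ : ℝ) (hϑ : ϑ = InnerProductGeometry.angle u v) (hϑ0 : 0 < ϑ) (hϑπ : ϑ < π)
    (O : EuclideanSpace ℝ (Fin 2))
    (W : Set (EuclideanSpace ℝ (Fin 2)))
    (hW : W = {P | ∃ s t : ℝ, 0 ≤ s ∧ 0 ≤ t ∧ P = O + s • u + t • v}) :
    (∀ X : EuclideanSpace ℝ (Fin 2),
      ϑ ≤ sSup {θ : ℝ | ∃ A ∈ W, ∃ B ∈ W, A ≠ X ∧ B ≠ X ∧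
          θ = InnerProductGeometry.angle (A - X) (B - X)}) ∧
    (∀ α : ℝ, α < ϑ →
      {X : EuclideanSpace ℝ (Fin 2) |
        sSup {θ : ℝ | ∃ A ∈ W, ∃ B ∈ W, A ≠ X ∧ B ≠ X ∧
          θ = InnerProductGeometry.angle (A - X) (B - X)} = α} = ∅) := by
  have hu0 : u ≠ 0 := norm_ne_zero_iff.mp (by simp [hu])
  have hv0 : v ≠ 0 := norm_ne_zero_iff.mp (by simp [hv])
  have main : ∀ X : EuclideanSpace ℝ (Fin 2),
      ϑ ≤ sSup {θ : ℝ | ∃ A ∈ W, ∃ B ∈ W, A ≠ X ∧ B ≠ X ∧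
          θ = InnerProductGeometry.angle (A - X) (B - X)} := by
    intro X
    rw [hϑ]
    refine le_of_tendsto (tendsto_angle_add_smul hu0 hv0 (O - X)) ?_
    filter_upwards [eventually_add_smul_ne_zero hu0 (O - X),
      eventually_add_smul_ne_zero hv0 (O - X), Filter.eventually_ge_atTop 0] with r hru hrv hr
    have shift (x : EuclideanSpace ℝ (Fin 2)) : O - X + r • x = O + r • x - X := by abel
    rw [shift, sub_ne_zero] at hru hrv
    refine le_csSup ⟨π, ?_⟩ ⟨O + r • u, ?_, O + r • v, ?_, hru, hrv, by rw [shift, shift]⟩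
    · rintro θ ⟨A, -, B, -, -, -, rfl⟩
      exact angle_le_pi _ _
    · rw [hW]
      exact ⟨r, 0, hr, le_rfl, by simp⟩
    · rw [hW]
      exact ⟨0, r, le_rfl, hr, by simp⟩
  refine ⟨main, fun α hα => Set.eq_empty_of_forall_notMem fun X hX => ?_⟩
  exact (hα.trans_le (main X)).ne' hX
end

section
/- Let A, B, X be points of ℝ² with X not lying on the segment [A, B]. Then for all points P, Q on the segment [A, B], the angle ∠(P − X, Q − X) is at most ∠(A − X, B − X). Hence the aperture angle of X with respect to the segment [A, B] equals the angle ∠ A X B subtended by its endpoints. -/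
open Real InnerProductGeometry

/-- The angle subtended by a segment at `X` splits additively at any point of the segment
other than `X`. -/
theorem angle_sub_eq_add_of_wbtw {V : Type*} [NormedAddCommGroup V] [InnerProductSpace ℝ V]
    {A P B X : V} (h : Wbtw ℝ A P B) (hP : P ≠ X) :
    angle (A - X) (B - X) = angle (A - X) (P - X) + angle (P - X) (B - X) := by
  refine angle_eq_angle_add_add_angle_add_of_mem_span (sub_ne_zero.mpr hP) ?_
  obtain ⟨a, b, ha, hb, hab, rfl⟩ := h.mem_segment
  lift a to NNReal using ha
  lift b to NNReal using hb
  refine Submodule.mem_span_pair.mpr ⟨a, b, ?_⟩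
  have hb' : (b : ℝ) = 1 - a := by linarith
  simp only [NNReal.smul_def, hb']
  module

/-- Nested points of a segment subtend a smaller angle than the endpoints. -/
theorem angle_sub_le_of_wbtw_of_wbtw {V : Type*} [NormedAddCommGroup V] [InnerProductSpace ℝ V]
    {A P Q B X : V} (hAQB : Wbtw ℝ A Q B) (hAPQ : Wbtw ℝ A P Q) (hP : P ≠ X) (hQ : Q ≠ X) :
    angle (P - X) (Q - X) ≤ angle (A - X) (B - X) := by
  rw [angle_sub_eq_add_of_wbtw hAQB hQ, angle_sub_eq_add_of_wbtw hAPQ hP]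
  linarith [angle_nonneg (A - X) (P - X), angle_nonneg (Q - X) (B - X)]

/-- Two points of a segment subtend at most the angle subtended by the endpoints, as seen from a
point off the segment. -/
theorem angle_sub_le_of_mem_segment {V : Type*} [NormedAddCommGroup V] [InnerProductSpace ℝ V]
    {A B X P Q : V} (hX : X ∉ segment ℝ A B) (hP : P ∈ segment ℝ A B) (hQ : Q ∈ segment ℝ A B) :
    angle (P - X) (Q - X) ≤ angle (A - X) (B - X) := by
  have hPX : P ≠ X := fun h => hX (h ▸ hP)
  have hQX : Q ≠ X := fun h => hX (h ▸ hQ)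
  have hAPB := mem_segment_iff_wbtw.mp hP
  have hAQB := mem_segment_iff_wbtw.mp hQ
  have htotal : Wbtw ℝ A P Q ∨ Wbtw ℝ A Q P := by
    obtain ⟨s, ⟨hs, -⟩, rfl⟩ := hAPB
    obtain ⟨t, ⟨ht, -⟩, rfl⟩ := hAQB
    exact wbtw_or_wbtw_smul_vadd_of_nonneg A (B -ᵥ A) hs ht
  rcases htotal with h | h
  · exact angle_sub_le_of_wbtw_of_wbtw hAQB h hPX hQX
  · rw [angle_comm]
    exact angle_sub_le_of_wbtw_of_wbtw hAPB h hQX hPX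

theorem aperture_angle_of_segment
    (A B X : EuclideanSpace ℝ (Fin 2)) (hX : X ∉ segment ℝ A B) :
    (∀ P ∈ segment ℝ A B, ∀ Q ∈ segment ℝ A B,
      InnerProductGeometry.angle (P - X) (Q - X) ≤
        InnerProductGeometry.angle (A - X) (B - X)) ∧
    sSup {θ : ℝ | ∃ P ∈ segment ℝ A B, ∃ Q ∈ segment ℝ A B,
        θ = InnerProductGeometry.angle (P - X) (Q - X)} =
      InnerProductGeometry.angle (A - X) (B - X) := by
  refine ⟨fun P hP Q hQ => angle_sub_le_of_mem_segment hX hP hQ, IsGreatest.csSup_eq ⟨?_, ?_⟩⟩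
  · exact ⟨A, left_mem_segment ℝ A B, B, right_mem_segment ℝ A B, rfl⟩
  · rintro _ ⟨P, hP, Q, hQ, rfl⟩
    exact angle_sub_le_of_mem_segment hX hP hQ
end
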